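/- Let d ≥ 1, s ∈ (0,1), p ∈ (1,∞), R₀ ∈ (0,1), k ∈ ℕ, and let u ∈ L^{p−1}_{sp}(ℝ^d) be continuous on B_{R₀}(0) and vanish to infinite order at 0 (for every n ∈ ℕ, u(x) = O(|x|^n) as |x| → 0). For ε > 0 and x ∈ ℝ^d define W₂(x,ε) := ∫_{B_{(k+1)ε}(x)^c} J_p(u(x)−u(y)) |x−y|^{−d−sp} dy + ∫_{B_{(k+1)ε}(0)^c} J_p(u(y)) |y|^{−d−sp} dy + ∫_{B_{(k+1)ε}(0)^c} J_p(u(y)) (|x−y|^{−d−sp} − |y|^{−d−sp}) dy. Then W₂ converges to zero of arbitrary order: for every n ∈ ℕ there exist C > 0 and ε₁ > 0 such that sup_{x ∈ B_{kε}(0)} |W₂(x,ε)| ≤ C ε^n for all ε ∈ (0,ε₁). -/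

import Mathlib

open MeasureTheory Filter Asymptotics Metric Set NNReal ENNReal

noncomputable section

/-- Euclidean space `ℝ^d`. -/
abbrev Ed (d : ℕ) := EuclideanSpace ℝ (Fin d)

/-- `J_p(t) = |t|^{p-2} t`. -/
def Jp (p t : ℝ) : ℝ := |t| ^ (p - 2) * t

/-- The principal value defining the fractional `p`-Laplacian of `u` at `x` exists and
equals `L`. -/
def fracPLapAt (d : ℕ) (s p : ℝ) (u : Ed d → ℝ) (x : Ed d) (L : ℝ) : Prop :=
  Tendsto (fun δ : ℝ =>
      ∫ y in {y : Ed d | δ < ‖x - y‖}, Jp p (u x - u y) / ‖x - y‖ ^ ((d : ℝ) + s * p))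
    (nhdsWithin 0 (Ioi 0)) (nhds L)

/-- Membership in the tail space `L^{p-1}_{sp}(ℝ^d)`. -/
def memTail (d : ℕ) (s p : ℝ) (u : Ed d → ℝ) : Prop :=
  Measurable u ∧
    Integrable (fun x : Ed d => |u x| ^ (p - 1) / (1 + ‖x‖) ^ ((d : ℝ) + s * p))

/-- The moments `m_{i,k} = ∫ x_i^{2k} |x|^{-4k} |u(x)|^{p-1} |x|^{-d-sp} dx ∈ [0,∞]`. -/
def mik (d : ℕ) (s p : ℝ) (u : Ed d → ℝ) (i : Fin d) (k : ℕ) : ℝ≥0∞ :=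
  ∫⁻ x : Ed d, ENNReal.ofReal
    ((x i ^ (2 * k) / ‖x‖ ^ (4 * k)) * (|u x| ^ (p - 1) / ‖x‖ ^ ((d : ℝ) + s * p)))

/-- The Carleman-type condition: for every `i` the series `∑_{k≥1} m_{i,k}^{-1/(2k)}`
diverges to `+∞` (with conventions `1/0 = ∞`, `1/∞ = 0`). -/
def carleman (d : ℕ) (s p : ℝ) (u : Ed d → ℝ) : Prop :=
  ∀ i : Fin d, ∑' k : ℕ, (mik d s p u i (k + 1) ^ ((1 : ℝ) / (2 * ((k : ℝ) + 1))))⁻¹ = ⊤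

theorem abs_Jp_aux (p t : ℝ) (hp : 1 < p) : |Jp p t| = |t| ^ (p - 1) := by
  unfold Jp
  rcases eq_or_ne t 0 with rfl | h
  · simp [Real.zero_rpow (by linarith : p - 1 ≠ 0)]
  · rw [abs_mul, abs_of_nonneg (by positivity)]
    have : p - 1 = (p - 2) + 1 := by ring
    rw [this, Real.rpow_add_one (by positivity)]

theorem Jp_nonneg_aux (p t : ℝ) (hp : 1 < p) (ht : 0 ≤ t) : Jp p t = t ^ (p - 1) := by
  rw [← abs_of_nonneg (show 0 ≤ Jp p t by unfold Jp; positivity), abs_Jp_aux p t hp,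
    abs_of_nonneg ht]

theorem Jp_neg_aux (p t : ℝ) : Jp p (-t) = - Jp p t := by
  unfold Jp; rw [abs_neg]; ring

theorem measurable_Jp_aux (p : ℝ) : Measurable (Jp p) := by
  unfold Jp; fun_prop

theorem rpow_diff_aux {X Y θ : ℝ} (hX : 0 ≤ X) (hY : 0 ≤ Y) (h0 : 0 < θ) (h1 : θ ≤ 1) :
    |X ^ θ - Y ^ θ| ≤ |X - Y| ^ θ := by
  wlog h : Y ≤ X generalizing X Y
  · rw [abs_sub_comm, abs_sub_comm X]; exact this hY hX (by linarith)
  rw [abs_of_nonneg (by linarith : 0 ≤ X - Y),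
    abs_of_nonneg (sub_nonneg.2 (Real.rpow_le_rpow hY h h0.le))]
  have := Real.rpow_add_le_add_rpow (sub_nonneg.2 h) hY h0.le h1
  rw [sub_add_cancel] at this
  linarith

/-- same sign estimate -/
theorem rpow_diff_aux2 {q : ℝ} (hq : 0 < q) (m : ℕ) (hm : 1 ≤ m) (hmq : q ≤ m)
    {X Y S : ℝ} (hX : 0 ≤ X) (hY : 0 ≤ Y) (hXS : X ≤ S) (hYS : Y ≤ S) (hS : 1 ≤ S) :
    |X ^ q - Y ^ q| ≤ m * |X - Y| ^ (q / m) * S ^ q := by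
  have hm0 : (0 : ℝ) < m := by exact_mod_cast hm
  set θ := q / m with hθ
  have hθ0 : 0 < θ := by positivity
  have hθ1 : θ ≤ 1 := by rw [hθ, div_le_one hm0]; exact hmq
  have hqe : q = θ * m := by rw [hθ]; field_simp
  have e : ∀ Z : ℝ, 0 ≤ Z → Z ^ q = (Z ^ θ) ^ m := by
    intro Z hZ
    rw [hqe, Real.rpow_mul_natCast hZ]
  have h1 := abs_pow_sub_pow_le (X ^ θ) (Y ^ θ) m
  rw [e X hX, e Y hY, e S (by linarith)]
  refine h1.trans ?_
  have hS1 : 1 ≤ S ^ θ := Real.one_le_rpow hS hθ0.le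
  have hmax : max |X ^ θ| |Y ^ θ| ≤ S ^ θ := by
    rw [abs_of_nonneg (by positivity), abs_of_nonneg (by positivity)]
    exact max_le (Real.rpow_le_rpow hX hXS hθ0.le) (Real.rpow_le_rpow hY hYS hθ0.le)
  have h2 : max |X ^ θ| |Y ^ θ| ^ (m - 1) ≤ (S ^ θ) ^ m :=
    (pow_le_pow_left₀ (le_max_of_le_left (abs_nonneg _)) hmax _).trans
      (pow_le_pow_right₀ hS1 (by omega))
  have h3 := rpow_diff_aux hX hY hθ0 hθ1
  have : |X ^ θ - Y ^ θ| * m ≤ m * |X - Y| ^ θ := by nlinarith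
  exact mul_le_mul this h2 (by positivity) (by positivity)

theorem Jp_diff_aux {p : ℝ} (hp : 1 < p) (m : ℕ) (hm : 1 ≤ m) (hmq : p - 1 ≤ m)
    {a b : ℝ} (ha : |a| ≤ 1) :
    |Jp p (a - b) + Jp p b| ≤ (m + 2) * |a| ^ ((p - 1) / m) * (1 + |b|) ^ (p - 1) := by
  have hq : 0 < p - 1 := by linarith
  have hm0 : (0 : ℝ) < m := by exact_mod_cast hm
  wlog hb : 0 ≤ b generalizing a b
  · have := this (a := -a) (b := -b) (by simpa using ha) (by linarith)
    rw [show -a - -b = -(a - b) by ring, Jp_neg_aux, Jp_neg_aux, abs_neg, abs_neg,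
      ← neg_add, abs_neg] at this
    exact this
  have hS : 1 ≤ 1 + |b| := by linarith [abs_nonneg b]
  have hSq : 1 ≤ (1 + |b|) ^ (p - 1) := Real.one_le_rpow hS hq.le
  have ht0 : 0 ≤ |a| ^ ((p - 1) / m) := by positivity
  rw [show a - b = -(b - a) by ring, Jp_neg_aux]
  rcases le_or_gt a b with h | h
  · rw [Jp_nonneg_aux p _ hp (sub_nonneg.2 h), Jp_nonneg_aux p _ hp hb]
    have h1 := rpow_diff_aux2 hq m hm hmq (X := b) (Y := b - a) (S := 1 + |b|) hb (by linarith)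
      (by linarith [le_abs_self b]) (by linarith [le_abs_self b, neg_abs_le a]) hS
    rw [show b - (b - a) = a by ring] at h1
    rw [show -(b - a) ^ (p - 1) + b ^ (p - 1) = b ^ (p - 1) - (b - a) ^ (p - 1) by ring]
    refine h1.trans ?_
    gcongr
    linarith
  · have haa : |a| = a := abs_of_nonneg (by linarith)
    have h1 : |Jp p (b - a)| ≤ |a| ^ (p - 1) := by
      rw [abs_Jp_aux p _ hp]
      refine Real.rpow_le_rpow (abs_nonneg _) ?_ hq.le
      rw [haa, abs_le]; constructor <;> linarith
    have h2 : |Jp p b| ≤ |a| ^ (p - 1) := by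
      rw [abs_Jp_aux p _ hp]
      refine Real.rpow_le_rpow (abs_nonneg _) ?_ hq.le
      rw [haa, abs_of_nonneg hb]; exact h.le
    have h3 : |a| ^ (p - 1) ≤ |a| ^ ((p - 1) / m) := by
      refine Real.rpow_le_rpow_of_exponent_ge (by linarith) ha ?_
      exact div_le_self hq.le (by exact_mod_cast hm)
    have h4 : |-Jp p (b - a) + Jp p b| ≤ |Jp p (b - a)| + |Jp p b| := by
      simpa using abs_add_le (-Jp p (b - a)) (Jp p b)
    calc _ ≤ 2 * |a| ^ ((p - 1) / m) := by linarith
      _ ≤ (m + 2) * |a| ^ ((p - 1) / m) := by nlinarith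
      _ ≤ _ := le_mul_of_one_le_right (by positivity) hSq

theorem kernel_aux {d : ℕ} {N ε : ℝ} (hN : 0 ≤ N) (he : 0 < ε) (he1 : ε ≤ 1) {x y : Ed d}
    (hx : ‖x‖ ≤ 1) (hxy : ε ≤ ‖x - y‖) :
    1 / ‖x - y‖ ^ N ≤ (3 / ε) ^ N * (1 / (1 + ‖y‖) ^ N) := by
  have hz : 0 < ‖x - y‖ := he.trans_le hxy
  have h1 : ‖y‖ ≤ ‖x‖ + ‖x - y‖ := by
    have := norm_sub_le x (x - y)
    simpa using this
  have h2 : 1 + ‖y‖ ≤ 3 / ε * ‖x - y‖ := by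
    rw [div_mul_eq_mul_div, le_div_iff₀ he]
    nlinarith [norm_nonneg y]
  have h3 : (1 + ‖y‖) ^ N ≤ (3 / ε) ^ N * ‖x - y‖ ^ N := by
    rw [← Real.mul_rpow (by positivity) hz.le]
    exact Real.rpow_le_rpow (by positivity) h2 hN
  rw [mul_one_div, div_le_div_iff₀ (by positivity) (by positivity), one_mul]
  exact h3

theorem G_integrable_aux {d : ℕ} {s p : ℝ} (hs : 0 < s) (hp : 1 < p) {u : Ed d → ℝ}
    (hu : memTail d s p u) :
    Integrable (fun y : Ed d => (1 + |u y|) ^ (p - 1) * (1 / (1 + ‖y‖) ^ ((d : ℝ) + s * p))) := by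
  obtain ⟨hm, hi⟩ := hu
  have h0 : Integrable (fun y : Ed d => (1 + ‖y‖) ^ (-((d : ℝ) + s * p))) := by
    apply integrable_one_add_norm
    simp only [finrank_euclideanSpace, Fintype.card_fin]
    have : 0 < s * p := by positivity
    linarith
  refine ((h0.add hi).const_mul ((2 : ℝ) ^ (p - 1))).mono' ?_ ?_
  · refine Measurable.aestronglyMeasurable ?_
    fun_prop
  · refine Eventually.of_forall fun y => ?_
    have hq : 0 ≤ p - 1 := by linarith
    rw [Real.norm_of_nonneg (by positivity)]
    simp only [Pi.add_apply]
    rw [Real.rpow_neg (by positivity), ← one_div, ← add_div, mul_one_div, ← mul_div_assoc]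
    refine div_le_div_of_nonneg_right ?_ (by positivity)
    have hab := abs_nonneg (u y)
    have h1 : (0:ℝ) ≤ |u y| ^ (p - 1) := by positivity
    rcases le_total 1 |u y| with h | h
    · calc (1 + |u y|) ^ (p - 1) ≤ (2 * |u y|) ^ (p - 1) :=
            Real.rpow_le_rpow (by positivity) (by linarith) hq
        _ = 2 ^ (p - 1) * |u y| ^ (p - 1) := Real.mul_rpow (by norm_num) hab
        _ ≤ _ := by gcongr; linarith
    · calc (1 + |u y|) ^ (p - 1) ≤ 2 ^ (p - 1) :=
            Real.rpow_le_rpow (by positivity) (by linarith) hq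
        _ ≤ _ := le_mul_of_one_le_right (by positivity) (by linarith)

/-- the main estimate -/
theorem W2_bound_aux {d : ℕ} {s p : ℝ} (hs : 0 < s) (hp : 1 < p) {u : Ed d → ℝ}
    (hu : memTail d s p u) (m : ℕ) (hm : 1 ≤ m) (hmq : p - 1 ≤ m) {r ε δ : ℝ}
    (he : 0 < ε) (he1 : ε ≤ 1) (hr : ε ≤ r) (hδ0 : 0 ≤ δ) (hδ1 : δ ≤ 1) {x : Ed d} (hx : ‖x‖ ≤ 1)
    (hxr : ‖x‖ ≤ r - ε) (hub : ∀ y, ‖y‖ < 2 * r → |u y| ≤ δ) :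
    |(∫ y in (ball x r)ᶜ, Jp p (u x - u y) / ‖x - y‖ ^ ((d : ℝ) + s * p))
          + (∫ y in (ball (0 : Ed d) r)ᶜ, Jp p (u y) / ‖y‖ ^ ((d : ℝ) + s * p))
          + (∫ y in (ball (0 : Ed d) r)ᶜ, Jp p (u y) *
              (1 / ‖x - y‖ ^ ((d : ℝ) + s * p) - 1 / ‖y‖ ^ ((d : ℝ) + s * p)))|
      ≤ ((m + 2 + 2 ^ (p - 1)) * δ ^ ((p - 1) / m) * (3 / ε) ^ ((d : ℝ) + s * p)) *
        ∫ y, (1 + |u y|) ^ (p - 1) * (1 / (1 + ‖y‖) ^ ((d : ℝ) + s * p)) := by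
  have hGi := G_integrable_aux hs hp hu
  have hum := hu.1
  have hJm := measurable_Jp_aux p
  have hN : 0 ≤ (d : ℝ) + s * p := by positivity
  set N := (d : ℝ) + s * p with hNdef
  set G : Ed d → ℝ := fun y => (1 + |u y|) ^ (p - 1) * (1 / (1 + ‖y‖) ^ N) with hG
  have hq : 0 < p - 1 := by linarith
  have hm0 : (0 : ℝ) < m := by exact_mod_cast hm
  have hux : |u x| ≤ δ := hub x (by linarith)
  have hJ1 : ∀ y, |Jp p (u x - u y)| ≤ (1 + |u y|) ^ (p - 1) := by
    intro y
    rw [abs_Jp_aux p _ hp]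
    refine Real.rpow_le_rpow (abs_nonneg _) ?_ hq.le
    linarith [abs_sub (u x) (u y)]
  have hJ2 : ∀ y, |Jp p (u y)| ≤ (1 + |u y|) ^ (p - 1) := by
    intro y
    rw [abs_Jp_aux p _ hp]
    exact Real.rpow_le_rpow (abs_nonneg _) (by linarith) hq.le
  have hd1 : ∀ y, y ∈ (ball x r)ᶜ → r ≤ ‖x - y‖ := by
    intro y hy
    simpa [dist_eq_norm, norm_sub_rev] using hy
  have hd2 : ∀ y, y ∈ (ball (0 : Ed d) r)ᶜ → r ≤ ‖y‖ := by
    intro y hy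
    simpa using hy
  have hd3 : ∀ y, y ∈ (ball (0 : Ed d) r)ᶜ → ε ≤ ‖x - y‖ := by
    intro y hy
    have := hd2 y hy
    have h1 := norm_sub_norm_le y x
    rw [norm_sub_rev] at h1
    linarith
  have hK : ∀ y, ε ≤ ‖x - y‖ → 1 / ‖x - y‖ ^ N ≤ (3 / ε) ^ N * (1 / (1 + ‖y‖) ^ N) :=
    fun y h => kernel_aux hN he he1 hx h
  have hK0 : ∀ y : Ed d, ε ≤ ‖y‖ → 1 / ‖y‖ ^ N ≤ (3 / ε) ^ N * (1 / (1 + ‖y‖) ^ N) := by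
    intro y h
    have := kernel_aux (x := 0) (y := y) hN he he1 (by simp) (by simpa using h)
    simpa using this
  have s1 : MeasurableSet (ball x r)ᶜ := measurableSet_ball.compl
  have s2 : MeasurableSet (ball (0 : Ed d) r)ᶜ := measurableSet_ball.compl
  have hCG : Integrable (fun y => (3 / ε) ^ N * G y) := hGi.const_mul _
  -- integrability of the pieces
  have i1 : IntegrableOn (fun y => Jp p (u x - u y) / ‖x - y‖ ^ N) (ball x r)ᶜ := by
    refine hCG.integrableOn.mono' (Measurable.aestronglyMeasurable (by fun_prop)) ?_
    refine (ae_restrict_iff' s1).2 (Eventually.of_forall fun y hy => ?_)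
    rw [div_eq_mul_one_div, norm_mul, Real.norm_eq_abs,
      Real.norm_of_nonneg (show 0 ≤ 1 / ‖x - y‖ ^ N by positivity)]
    calc _ ≤ (1 + |u y|) ^ (p - 1) * ((3 / ε) ^ N * (1 / (1 + ‖y‖) ^ N)) :=
          mul_le_mul (hJ1 y) (hK y (hr.trans (hd1 y hy))) (by positivity) (by positivity)
      _ = _ := by simp only [hG]; ring
  have i2 : IntegrableOn (fun y => Jp p (u y) / ‖y‖ ^ N) (ball (0 : Ed d) r)ᶜ := by
    refine hCG.integrableOn.mono' (Measurable.aestronglyMeasurable (by fun_prop)) ?_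
    refine (ae_restrict_iff' s2).2 (Eventually.of_forall fun y hy => ?_)
    rw [div_eq_mul_one_div, norm_mul, Real.norm_eq_abs,
      Real.norm_of_nonneg (show 0 ≤ 1 / ‖y‖ ^ N by positivity)]
    calc _ ≤ (1 + |u y|) ^ (p - 1) * ((3 / ε) ^ N * (1 / (1 + ‖y‖) ^ N)) :=
          mul_le_mul (hJ2 y) (hK0 y (hr.trans (hd2 y hy))) (by positivity) (by positivity)
      _ = _ := by simp only [hG]; ring
  have i3 : IntegrableOn (fun y => Jp p (u y) / ‖x - y‖ ^ N) (ball (0 : Ed d) r)ᶜ := by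
    refine hCG.integrableOn.mono' (Measurable.aestronglyMeasurable (by fun_prop)) ?_
    refine (ae_restrict_iff' s2).2 (Eventually.of_forall fun y hy => ?_)
    rw [div_eq_mul_one_div, norm_mul, Real.norm_eq_abs,
      Real.norm_of_nonneg (show 0 ≤ 1 / ‖x - y‖ ^ N by positivity)]
    calc _ ≤ (1 + |u y|) ^ (p - 1) * ((3 / ε) ^ N * (1 / (1 + ‖y‖) ^ N)) :=
          mul_le_mul (hJ2 y) (hK y (hd3 y hy)) (by positivity) (by positivity)
      _ = _ := by simp only [hG]; ring
  have e3 : (∫ y in (ball (0 : Ed d) r)ᶜ, Jp p (u y) * (1 / ‖x - y‖ ^ N - 1 / ‖y‖ ^ N))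
      = (∫ y in (ball (0 : Ed d) r)ᶜ, Jp p (u y) / ‖x - y‖ ^ N)
        - ∫ y in (ball (0 : Ed d) r)ᶜ, Jp p (u y) / ‖y‖ ^ N := by
    rw [← integral_sub i3 i2]
    congr 1
    ext y
    ring
  rw [e3, add_assoc, add_sub_cancel, ← integral_indicator s1, ← integral_indicator s2,
    ← integral_add (i1.integrable_indicator s1) (i3.integrable_indicator s2),
    ← integral_const_mul, ← Real.norm_eq_abs]
  refine norm_integral_le_of_norm_le (hGi.const_mul _) (Eventually.of_forall fun y => ?_)
  rw [Real.norm_eq_abs]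
  -- pointwise bound
  have hθq : ∀ t : ℝ, 0 ≤ t → t ≤ 1 → t ^ (p - 1) ≤ t ^ ((p - 1) / m) := by
    intro t h0 h1
    rcases h0.eq_or_lt with rfl | h0
    · rw [Real.zero_rpow hq.ne', Real.zero_rpow (by positivity)]
    exact Real.rpow_le_rpow_of_exponent_ge h0 h1 (div_le_self hq.le (by exact_mod_cast hm))
  have h2q : (1 : ℝ) ≤ 2 ^ (p - 1) := Real.one_le_rpow (by norm_num) hq.le
  have hSq : 1 ≤ (1 + |u y|) ^ (p - 1) :=
    Real.one_le_rpow (by linarith [abs_nonneg (u y)]) hq.le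
  have key : ∀ T : ℝ, ε ≤ ‖x - y‖ →
      |T| ≤ (m + 2 + 2 ^ (p - 1)) * δ ^ ((p - 1) / m) * (1 + |u y|) ^ (p - 1) →
      |T / ‖x - y‖ ^ N| ≤ ((m + 2 + 2 ^ (p - 1)) * δ ^ ((p - 1) / m) * (3 / ε) ^ N) * G y := by
    intro T h hT
    rw [div_eq_mul_one_div, abs_mul, abs_of_nonneg (show 0 ≤ 1 / ‖x - y‖ ^ N by positivity)]
    calc _ ≤ ((m + 2 + 2 ^ (p - 1)) * δ ^ ((p - 1) / m) * (1 + |u y|) ^ (p - 1)) *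
          ((3 / ε) ^ N * (1 / (1 + ‖y‖) ^ N)) :=
          mul_le_mul hT (hK y h) (by positivity) (by positivity)
      _ = _ := by simp only [hG]; ring
  have hD : 0 ≤ δ ^ ((p - 1) / m) := by positivity
  by_cases h1 : y ∈ (ball x r)ᶜ
  · by_cases h2 : y ∈ (ball (0 : Ed d) r)ᶜ
    · rw [indicator_of_mem h1, indicator_of_mem h2, ← add_div]
      refine key _ (hd3 y h2) ((Jp_diff_aux hp m hm hmq (hux.trans hδ1)).trans ?_)
      have hc : (m : ℝ) + 2 ≤ m + 2 + 2 ^ (p - 1) := by linarith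
      have hpw : |u x| ^ ((p - 1) / m) ≤ δ ^ ((p - 1) / m) :=
        Real.rpow_le_rpow (abs_nonneg _) hux (by positivity)
      exact mul_le_mul_of_nonneg_right
        (mul_le_mul hc hpw (by positivity) (by positivity)) (by positivity)
    · rw [indicator_of_mem h1, indicator_of_notMem h2, add_zero]
      refine key _ (hr.trans (hd1 y h1)) ?_
      have hy : ‖y‖ < r := by simpa using h2
      have huy := hub y (by linarith)
      rw [abs_Jp_aux p _ hp]
      calc |u x - u y| ^ (p - 1) ≤ (2 * δ) ^ (p - 1) :=
            Real.rpow_le_rpow (abs_nonneg _) (by linarith [abs_sub (u x) (u y)]) hq.le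
        _ = 2 ^ (p - 1) * δ ^ (p - 1) := Real.mul_rpow (by norm_num) hδ0
        _ ≤ (m + 2 + 2 ^ (p - 1)) * δ ^ ((p - 1) / m) :=
            mul_le_mul (by linarith) (hθq δ hδ0 hδ1) (by positivity) (by positivity)
        _ ≤ _ := le_mul_of_one_le_right (by positivity) hSq
  · by_cases h2 : y ∈ (ball (0 : Ed d) r)ᶜ
    · rw [indicator_of_notMem h1, indicator_of_mem h2, zero_add]
      refine key _ (hd3 y h2) ?_
      have hy : ‖y - x‖ < r := by simpa [dist_eq_norm] using h1
      have hy2 : ‖y‖ < 2 * r := by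
        have := norm_sub_norm_le y x
        linarith
      have huy := hub y hy2
      rw [abs_Jp_aux p _ hp]
      calc |u y| ^ (p - 1) ≤ δ ^ (p - 1) := Real.rpow_le_rpow (abs_nonneg _) huy hq.le
        _ ≤ δ ^ ((p - 1) / m) := hθq δ hδ0 hδ1
        _ ≤ (m + 2 + 2 ^ (p - 1)) * δ ^ ((p - 1) / m) := le_mul_of_one_le_left hD (by linarith)
        _ ≤ _ := le_mul_of_one_le_right (by positivity) hSq
    · rw [indicator_of_notMem h1, indicator_of_notMem h2, add_zero, abs_zero]
      positivity

/-- Claim B. If `u ∈ L^{p-1}_{sp}(ℝ^d)` is continuous on `B_{R₀}(0)` and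
vanishes to infinite order at `0`, then
`W₂(x,ε) = ∫_{B_{(k+1)ε}(x)^c} J_p(u(x)-u(y)) |x-y|^{-d-sp} dy
  + ∫_{B_{(k+1)ε}(0)^c} J_p(u(y)) |y|^{-d-sp} dy
  + ∫_{B_{(k+1)ε}(0)^c} J_p(u(y)) (|x-y|^{-d-sp} - |y|^{-d-sp}) dy`
converges to zero of arbitrary order, uniformly for `x ∈ B_{kε}(0)`. -/
theorem claimB
    (d : ℕ) (hd : 1 ≤ d) (s p : ℝ) (hs : s ∈ Ioo (0 : ℝ) 1) (hp : 1 < p)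
    (R₀ : ℝ) (hR₀ : R₀ ∈ Ioo (0 : ℝ) 1) (k : ℕ)
    (u : Ed d → ℝ) (hu : memTail d s p u)
    (hcont : ContinuousOn u (ball (0 : Ed d) R₀))
    (hvan : ∀ n : ℕ, u =O[nhds (0 : Ed d)] fun x => ‖x‖ ^ n) :
    ∀ n : ℕ, ∃ C > (0 : ℝ), ∃ ε₁ > (0 : ℝ), ∀ ε ∈ Ioo (0 : ℝ) ε₁,
      ∀ x ∈ ball (0 : Ed d) (k * ε),
        |(∫ y in (ball x ((k + 1) * ε))ᶜ, Jp p (u x - u y) / ‖x - y‖ ^ ((d : ℝ) + s * p))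
          + (∫ y in (ball (0 : Ed d) ((k + 1) * ε))ᶜ, Jp p (u y) / ‖y‖ ^ ((d : ℝ) + s * p))
          + (∫ y in (ball (0 : Ed d) ((k + 1) * ε))ᶜ, Jp p (u y) *
              (1 / ‖x - y‖ ^ ((d : ℝ) + s * p) - 1 / ‖y‖ ^ ((d : ℝ) + s * p)))|
          ≤ C * ε ^ n := by
  intro n
  have hq : 0 < p - 1 := by linarith
  obtain ⟨m0, hm0⟩ := exists_nat_ge (p - 1)
  obtain ⟨m, hm, hmq⟩ : ∃ m : ℕ, 1 ≤ m ∧ p - 1 ≤ m :=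
    ⟨m0 + 1, by omega, by push_cast; linarith⟩
  have hmpos : (0 : ℝ) < m := by exact_mod_cast hm
  set N := (d : ℝ) + s * p with hNdef
  have hspos := hs.1
  have hN : 0 ≤ N := by positivity
  set θ := (p - 1) / m with hθ
  have hθ0 : 0 < θ := by positivity
  obtain ⟨M0, hM0⟩ := exists_nat_ge ((n + N) / θ)
  obtain ⟨M, hM, hMq⟩ : ∃ M : ℕ, 1 ≤ M ∧ n + N ≤ M * θ := by
    refine ⟨M0 + 1, by omega, ?_⟩
    rw [div_le_iff₀ hθ0] at hM0
    push_cast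
    linarith
  obtain ⟨A0, hA0, hA⟩ := (hvan M).exists_pos
  rw [isBigOWith_iff, Metric.eventually_nhds_iff] at hA
  obtain ⟨ρ, hρ, hA⟩ := hA
  set A := A0 * (2 * ((k : ℝ) + 1)) ^ M + 1 with hAdef
  have hA1 : 1 ≤ A := by
    have : 0 ≤ A0 * (2 * ((k : ℝ) + 1)) ^ M := by positivity
    linarith
  have hApos : 0 < A := by linarith
  set I := ∫ y, (1 + |u y|) ^ (p - 1) * (1 / (1 + ‖y‖) ^ N) with hI
  have hI0 : 0 ≤ I := integral_nonneg fun y => by positivity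
  have hk : (0 : ℝ) ≤ k := Nat.cast_nonneg k
  refine ⟨(m + 2 + 2 ^ (p - 1)) * A ^ θ * 3 ^ N * I + 1, by positivity,
    min (min 1 (1 / (k + 1))) (min (ρ / (2 * (k + 1))) (1 / A)), by positivity, ?_⟩
  rintro ε ⟨he, hlt⟩ x hx
  simp only [lt_min_iff] at hlt
  obtain ⟨⟨he1, hek⟩, heρ, heA⟩ := hlt
  rw [lt_div_iff₀ (by positivity)] at hek heρ heA
  have hx' : ‖x‖ < k * ε := by simpa using hx
  have hmain := W2_bound_aux hspos hp hu m hm hmq (r := ((k : ℝ) + 1) * ε) (ε := ε)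
    (δ := A * ε ^ M) he he1.le (by nlinarith) (by positivity) ?_ (x := x) (by nlinarith)
    (by nlinarith) ?_
  · rw [← hNdef] at hmain
    refine hmain.trans ?_
    have e1 : (A * ε ^ M) ^ θ = A ^ θ * ε ^ (M * θ) := by
      rw [Real.mul_rpow hApos.le (by positivity), ← Real.rpow_natCast_mul he.le]
    have e2 : (3 / ε) ^ N = 3 ^ N * ε ^ (-N) := by
      rw [Real.div_rpow (by norm_num) he.le, Real.rpow_neg he.le, div_eq_mul_inv]
    have e3 : ε ^ (M * θ) * ε ^ (-N) ≤ ε ^ n := by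
      rw [← Real.rpow_add he, ← Real.rpow_natCast]
      exact Real.rpow_le_rpow_of_exponent_ge he he1.le (by linarith)
    rw [← hθ, ← hI, e1, e2]
    calc _ = ((m + 2 + 2 ^ (p - 1)) * A ^ θ * 3 ^ N * I) * (ε ^ (M * θ) * ε ^ (-N)) := by ring
      _ ≤ ((m + 2 + 2 ^ (p - 1)) * A ^ θ * 3 ^ N * I) * ε ^ n := by gcongr
      _ ≤ _ := by gcongr; linarith
  · calc A * ε ^ M ≤ A * ε ^ 1 := by
          gcongr A * ?_
          exact pow_le_pow_of_le_one he.le he1.le hM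
      _ ≤ 1 := by linarith [mul_comm A ε, pow_one ε, heA.le, (by ring : A * ε ^ 1 = ε * A)]
  · intro y hy
    have h1 := hA (y := y) (by rw [dist_zero_right]; nlinarith)
    rw [Real.norm_eq_abs, norm_pow, norm_norm] at h1
    calc |u y| ≤ A0 * ‖y‖ ^ M := h1
      _ ≤ A0 * (2 * (((k : ℝ) + 1) * ε)) ^ M := by gcongr
      _ = A0 * (2 * ((k : ℝ) + 1)) ^ M * ε ^ M := by rw [← mul_assoc, mul_pow]; ring
      _ ≤ A * ε ^ M := by gcongr; linarith
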